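/- arXiv:0802.2554 — 2 statements merged into one kernel-verified Lean document; each statement's English description precedes it below -/
import Mathlib

section
/- Let X be a finite set and let d ≥ 0. A finite-state automorphism g of X^* belongs to P_d(X) if and only if there exists a finite set of eventually periodic sequences W = {v_i u_i^ω : 1 ≤ i ≤ k} ⊆ X^ω such that for each i the restriction g|_{v_i u_i^n} does not depend on n, and g|_v ∈ P_{d-1}(X) for every v ∈ X^* that is not a beginning of any v_i u_i^ω. -/
/-! The rooted tree `X^*` of finite words over a fixed alphabet `X`, realized via its
boundary `X^ω = ℕ → X`; automorphisms, restrictions, self-similar and contracting groups. -/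

/-- A permutation of the boundary `X^ω = ℕ → X` is (induced by) an automorphism of the
rooted tree `X^*` iff for all `n` it preserves the relation "agree on the first `n`
letters" (two sequences have the same length-`n` beginning iff their images do). -/
def IsTreeAut {X : Type*} (f : Equiv.Perm (ℕ → X)) : Prop :=
  ∀ (n : ℕ) (w w' : ℕ → X),
    (∀ i, i < n → w i = w' i) ↔ (∀ i, i < n → f w i = f w' i)

/-- The automorphism group `Aut X^*` of the rooted tree `X^*`, realized as the group of
those permutations of the boundary `X^ω` induced by tree automorphisms. -/
def treeAut (X : Type*) : Subgroup (Equiv.Perm (ℕ → X)) where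
  carrier := {f | IsTreeAut f}
  one_mem' := by intro n w w'; simp
  mul_mem' := by
    intro f g hf hg n w w'
    have h := (hg n w w').trans (hf n (g w) (g w'))
    simpa using h
  inv_mem' := by
    intro f hf n w w'
    have h := (hf n (f⁻¹ w) (f⁻¹ w')).symm
    simpa using h

/-- The concatenation `v·u ∈ X^ω` of a finite word `v ∈ X^m` and a sequence `u ∈ X^ω`. -/
def wappend {X : Type*} {m : ℕ} (v : Fin m → X) (u : ℕ → X) : ℕ → X :=
  fun i => if h : i < m then v ⟨i, h⟩ else u (i - m)

/-- The underlying function of the restriction `f|_v`: it sends `u` to the sequence with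
`v·u ↦ (f v)·(f|_v u)`, i.e. `(f|_v u) j` is letter `m + j` of `f (v·u)`. -/
def restrictFun {X : Type*} (f : Equiv.Perm (ℕ → X)) {m : ℕ} (v : Fin m → X) :
    (ℕ → X) → (ℕ → X) :=
  fun u j => f (wappend v u) (m + j)

open scoped Classical in
/-- The restriction (section, state) `f|_v` of `f` at the vertex `v ∈ X^*`: the unique
automorphism of `X^*` with `f (v·u) = (f v)·(f|_v u)` for all `u`.  (For `f` a tree
automorphism the underlying function `restrictFun f v` is bijective, and `f|_v` is the
corresponding permutation of the boundary.) -/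
noncomputable def restrictPerm {X : Type*} (f : Equiv.Perm (ℕ → X)) {m : ℕ}
    (v : Fin m → X) : Equiv.Perm (ℕ → X) :=
  if h : Function.Bijective (restrictFun f v) then Equiv.ofBijective _ h else 1

/-- A group `G` of permutations of the boundary is self-similar if it is closed under
taking restrictions. -/
def SelfSimilar {X : Type*} (G : Subgroup (Equiv.Perm (ℕ → X))) : Prop :=
  ∀ g ∈ G, ∀ (m : ℕ) (v : Fin m → X), restrictPerm g v ∈ G

/-- The (self-similar) group `G` is contracting with the finite set `N ⊆ G`: for every
`g ∈ G` there is `n` such that `g|_v ∈ N` for all words `v` of length greater than `n`. -/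
def IsContractingWith {X : Type*} (G : Subgroup (Equiv.Perm (ℕ → X)))
    (N : Finset (Equiv.Perm (ℕ → X))) : Prop :=
  (N : Set (Equiv.Perm (ℕ → X))) ⊆ (G : Set (Equiv.Perm (ℕ → X))) ∧
    ∀ g ∈ G, ∃ n : ℕ, ∀ (m : ℕ) (v : Fin m → X), n < m → restrictPerm g v ∈ N

/-- The restriction `f|_v` is trivial: `f` maps `v·u` to `(f v)·u` for every `u`. -/
def RestrictTrivial {X : Type*} (f : Equiv.Perm (ℕ → X)) {m : ℕ} (v : Fin m → X) : Prop :=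
  ∀ u : ℕ → X, (∀ i : Fin m, u i = v i) → ∀ i, m ≤ i → f u i = u i

/-- The growth function `θ_f(n) = |{v ∈ X^n : f|_v ≠ id}|` of `f`. -/
noncomputable def thetaGrowth {X : Type*} (f : Equiv.Perm (ℕ → X)) (n : ℕ) : ℕ :=
  {v : Fin n → X | ¬ RestrictTrivial f v}.ncard

/-- `f` is finite-state: it has only finitely many restrictions `f|_v`, `v ∈ X^*`. -/
def FiniteState {X : Type*} (f : Equiv.Perm (ℕ → X)) : Prop :=
  {h : Equiv.Perm (ℕ → X) | ∃ (m : ℕ) (v : Fin m → X), restrictPerm f v = h}.Finite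

/-- `f` is finitary: for some `n`, `f|_v = id` for all words `v` of length `n`. -/
def IsFinitary {X : Type*} (f : Equiv.Perm (ℕ → X)) : Prop :=
  ∃ n : ℕ, ∀ u : ℕ → X, ∀ i, n ≤ i → f u i = u i

/-- Membership in Sidki's group `P_d(X)`, for `d ≥ -1`: for `d = -1`, the finitary
automorphisms of `X^*`; for `d ≥ 0`, the finite-state automorphisms of `X^*` whose growth
function `θ` is bounded above by a polynomial of degree `d`. -/
def MemP {X : Type*} (d : ℤ) (f : Equiv.Perm (ℕ → X)) : Prop :=
  IsTreeAut f ∧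
    ((d = -1 ∧ IsFinitary f) ∨
      (0 ≤ d ∧ FiniteState f ∧
        ∃ p : Polynomial ℕ, (p.natDegree : ℤ) ≤ d ∧ ∀ n, thetaGrowth f n ≤ p.eval n))

/-- The set `Σ_f` of `f`-singular points of `X^ω`: points none of whose beginnings `v`
satisfy `f|_v = id`. -/
def singularSet {X : Type*} (f : Equiv.Perm (ℕ → X)) : Set (ℕ → X) :=
  {w | ∀ m : ℕ, ¬ RestrictTrivial f (fun i : Fin m => w i)}

open scoped Classical in
/-- The eventually periodic sequence `v·u^ω ∈ X^ω` determined by a finite word `v` of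
length `k` and a (nonempty) finite word `u` of length `l`. -/
noncomputable def epSeq {X : Type*} [Nonempty X] (k l : ℕ) (v : Fin k → X) (u : Fin l → X) :
    ℕ → X :=
  fun j => if h : j < k then v ⟨j, h⟩
    else if hl : 0 < l then u ⟨(j - k) % l, Nat.mod_lt _ hl⟩ else Classical.arbitrary X

/-- A sequence of natural numbers is eventually zero (`d = 0`), or `O((n + 1) ^ (d - 1))`
(`d ≥ 1`). -/
def PolyBounded : ℕ → (ℕ → ℕ) → Prop
  | 0, f => ∃ N, ∀ n, N ≤ n → f n = 0
  | d + 1, f => ∃ C, ∀ n, f n ≤ C * (n + 1) ^ d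

namespace PolyBounded

theorem mono {d : ℕ} {f h : ℕ → ℕ} (hh : PolyBounded d h) (hf : ∀ n, f n ≤ h n) :
    PolyBounded d f := by
  cases d with
  | zero =>
    obtain ⟨N, hN⟩ := hh
    exact ⟨N, fun n hn => Nat.le_zero.1 ((hf n).trans (hN n hn).le)⟩
  | succ d =>
    obtain ⟨C, hC⟩ := hh
    exact ⟨C, fun n => (hf n).trans (hC n)⟩

theorem zero (d : ℕ) : PolyBounded d (fun _ => 0) := by
  cases d with
  | zero => exact ⟨0, fun _ _ => rfl⟩
  | succ d => exact ⟨0, fun _ => Nat.zero_le _⟩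

theorem add {d : ℕ} {f h : ℕ → ℕ} (hf : PolyBounded d f) (hh : PolyBounded d h) :
    PolyBounded d (fun n => f n + h n) := by
  cases d with
  | zero =>
    obtain ⟨N, hN⟩ := hf
    obtain ⟨M, hM⟩ := hh
    exact ⟨N + M, fun n hn => by simp [hN n (by omega), hM n (by omega)]⟩
  | succ d =>
    obtain ⟨C, hC⟩ := hf
    obtain ⟨D, hD⟩ := hh
    exact ⟨C + D, fun n => by rw [add_mul]; exact add_le_add (hC n) (hD n)⟩

theorem sum {d : ℕ} {ι : Type*} (s : Finset ι) {f : ι → ℕ → ℕ}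
    (hf : ∀ i ∈ s, PolyBounded d (f i)) : PolyBounded d (fun n => ∑ i ∈ s, f i n) := by
  classical
  induction s using Finset.induction_on with
  | empty => simpa using zero d
  | insert a s ha ih =>
    simp only [Finset.sum_insert ha]
    exact (hf a (by simp)).add (ih fun i hi => hf i (by simp [hi]))

theorem shift {d : ℕ} {f : ℕ → ℕ} (hf : PolyBounded d f) (c : ℕ) :
    PolyBounded d (fun n => f (n + c)) := by
  cases d with
  | zero =>
    obtain ⟨N, hN⟩ := hf
    exact ⟨N, fun n hn => hN _ (by omega)⟩
  | succ d =>
    obtain ⟨C, hC⟩ := hf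
    refine ⟨C * (c + 1) ^ d, fun n => (hC _).trans ?_⟩
    rw [mul_assoc, ← mul_pow]
    gcongr
    nlinarith

theorem of_shift_one {d : ℕ} {f : ℕ → ℕ} (hf : PolyBounded d (fun n => f (n + 1))) :
    PolyBounded d f := by
  cases d with
  | zero =>
    obtain ⟨N, hN⟩ := hf
    refine ⟨N + 1, fun n hn => ?_⟩
    obtain ⟨k, rfl⟩ : ∃ k, n = k + 1 := ⟨n - 1, by omega⟩
    exact hN k (by omega)
  | succ d =>
    obtain ⟨C, hC⟩ := hf
    refine ⟨C + f 0, fun n => ?_⟩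
    cases n with
    | zero => simp
    | succ n =>
      refine (hC n).trans ?_
      gcongr <;> omega

theorem partial_sum {d : ℕ} {f : ℕ → ℕ} (hf : PolyBounded d f) (K M : ℕ) :
    PolyBounded (d + 1) (fun n => K + M * ∑ j ∈ Finset.range n, f j) := by
  cases d with
  | zero =>
    obtain ⟨N, hN⟩ := hf
    refine ⟨K + M * ∑ j ∈ Finset.range N, f j, fun n => ?_⟩
    rw [pow_zero, mul_one]
    refine Nat.add_le_add_left (Nat.mul_le_mul_left _ ?_) _
    rcases le_total n N with h | h
    · exact Finset.sum_le_sum_of_subset (Finset.range_mono h)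
    · refine (Finset.sum_subset (Finset.range_mono h) fun j _ hj => hN j ?_).ge
      simpa using hj
  | succ d =>
    obtain ⟨C, hC⟩ := hf
    refine ⟨K + M * C, fun n => ?_⟩
    have h1 : ∑ j ∈ Finset.range n, f j ≤ n * (C * (n + 1) ^ d) := by
      refine (Finset.sum_le_card_nsmul _ _ (C * (n + 1) ^ d) fun j hj => (hC j).trans ?_).trans
        (by simp)
      have := Finset.mem_range.1 hj
      gcongr
    have h2 : 1 ≤ (n + 1) ^ (d + 1) := Nat.one_le_pow _ _ (by omega)
    calc K + M * ∑ j ∈ Finset.range n, f j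
        ≤ K * (n + 1) ^ (d + 1) + M * ((n + 1) * (C * (n + 1) ^ d)) := by
          refine add_le_add (Nat.le_mul_of_pos_right _ h2) ?_
          gcongr
          exact h1.trans (by gcongr; omega)
      _ = (K + M * C) * (n + 1) ^ (d + 1) := by ring

theorem succ {d : ℕ} {f : ℕ → ℕ} (hf : PolyBounded d f) : PolyBounded (d + 1) f := by
  refine ((hf.partial_sum 0 1).shift 1).mono fun n => ?_
  rw [zero_add, one_mul]
  exact Finset.single_le_sum (fun _ _ => Nat.zero_le _) (Finset.self_mem_range_succ n)

/-- If `j + 1` copies of `f m` fit into `F (j * L + c + m)`, then `f` grows slower than `F` by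
one degree. -/
theorem of_mul_le {d : ℕ} {f F : ℕ → ℕ} (hF : PolyBounded (d + 1) F) (L c : ℕ)
    (h : ∀ j m, (j + 1) * f m ≤ F (j * L + c + m)) : PolyBounded d f := by
  obtain ⟨C, hC⟩ := hF
  cases d with
  | zero =>
    refine ⟨0, fun m _ => ?_⟩
    have h1 := (h C m).trans (hC _)
    by_contra h0
    have : 1 ≤ f m := Nat.one_le_iff_ne_zero.2 h0
    rw [pow_zero] at h1
    nlinarith
  | succ d =>
    refine ⟨C * (L + c + 1) ^ (d + 1), fun m => ?_⟩
    refine Nat.le_of_mul_le_mul_left (?_ : (m + 1) * f m ≤ (m + 1) * _) (Nat.succ_pos m)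
    calc (m + 1) * f m ≤ C * (m * L + c + m + 1) ^ (d + 1) := (h m m).trans (hC _)
      _ ≤ C * ((L + c + 1) * (m + 1)) ^ (d + 1) := by
          gcongr
          nlinarith
      _ = (m + 1) * (C * (L + c + 1) ^ (d + 1) * (m + 1) ^ d) := by
          rw [mul_pow, pow_succ (m + 1)]; ring

end PolyBounded

section Automaton

variable {Q X : Type*} (step : Q → X → Q) (e : Q)

/-- The words of length `n` that lead from the state `q` to a state other than `e`. -/
def activeWords (q : Q) (n : ℕ) : Set (List X) :=
  {l | l.length = n ∧ l.foldl step q ≠ e}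

/-- The number of words of length `n` that lead from `q` to a state other than `e`. -/
noncomputable def activity (q : Q) (n : ℕ) : ℕ := (activeWords step e q n).ncard

/-- The state reached from `q` after reading the first `m` letters of `w`. -/
def stateAt (q : Q) (w : ℕ → X) (m : ℕ) : Q := ((List.range m).map w).foldl step q

theorem stateAt_zero (q : Q) (w : ℕ → X) : stateAt step q w 0 = q := rfl

theorem stateAt_succ (q : Q) (w : ℕ → X) (m : ℕ) :
    stateAt step q w (m + 1) = step (stateAt step q w m) (w m) := by
  simp [stateAt, List.range_succ]

theorem stateAt_add (q : Q) (w : ℕ → X) (m n : ℕ) :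
    stateAt step q w (m + n) = stateAt step (stateAt step q w m) (fun t => w (m + t)) n := by
  simp only [stateAt, List.range_add, List.map_append, List.foldl_append, List.map_map]
  rfl

theorem stateAt_congr (q : Q) {w w' : ℕ → X} {m : ℕ} (h : ∀ t < m, w t = w' t) :
    stateAt step q w m = stateAt step q w' m := by
  unfold stateAt
  rw [List.map_congr_left fun t ht => h t (List.mem_range.1 ht)]

theorem stateAt_add_mul (q : Q) {w : ℕ → X} {m l : ℕ}
    (hw : ∀ j, m ≤ j → w (j + l) = w j)
    (hs : stateAt step q w (m + l) = stateAt step q w m) (n : ℕ) :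
    stateAt step q w (m + n * l) = stateAt step q w m := by
  induction n with
  | zero => simp
  | succ n ih =>
    rw [show m + (n + 1) * l = m + l + n * l by ring, stateAt_add, hs]
    rw [stateAt_add] at ih
    refine (stateAt_congr _ _ fun t _ => ?_).trans ih
    rw [show m + l + t = m + t + l by ring]
    exact hw _ (by omega)

variable {step}

theorem foldl_flatten_replicate {q : Q} {a : List X} (h : a.foldl step q = q) (n : ℕ) :
    (List.replicate n a).flatten.foldl step q = q := by
  induction n with
  | zero => rfl
  | succ n ih => rw [List.replicate_succ, List.flatten_cons, List.foldl_append, h, ih]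

theorem eq_of_flatten_replicate_append_eq {a p s s' : List X} (hpa : ¬ p <+: a)
    (hlen : p.length ≤ a.length) {i i' : ℕ}
    (h : (List.replicate i a).flatten ++ (p ++ s) = (List.replicate i' a).flatten ++ (p ++ s')) :
    i = i' := by
  induction i generalizing i' with
  | zero =>
    cases i' with
    | zero => rfl
    | succ i' =>
      refine absurd (List.prefix_of_prefix_length_le (l₃ := p ++ s) ⟨s, rfl⟩ ?_ hlen) hpa
      simp only [List.replicate_zero, List.flatten_nil, List.nil_append] at h
      rw [h, List.replicate_succ, List.flatten_cons, List.append_assoc]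
      exact List.prefix_append _ _
  | succ i ih =>
    cases i' with
    | zero =>
      refine absurd (List.prefix_of_prefix_length_le (l₃ := p ++ s') ⟨s', rfl⟩ ?_ hlen) hpa
      simp only [List.replicate_zero, List.flatten_nil, List.nil_append] at h
      rw [← h, List.replicate_succ, List.flatten_cons, List.append_assoc]
      exact List.prefix_append _ _
    | succ i' =>
      simp only [List.replicate_succ, List.flatten_cons, List.append_assoc,
        List.append_cancel_left_eq] at h
      rw [ih (by simpa using h)]

theorem stateAt_mod_mul {q : Q} {f : ℕ → X} {l : ℕ} (h : stateAt step q f l = q)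
    (K : ℕ) : stateAt step q (fun t => f (t % l)) (K * l) = q := by
  have := stateAt_add_mul step q (w := fun t => f (t % l)) (m := 0) (l := l) (by simp) (by
    rw [zero_add, stateAt_zero]
    exact (stateAt_congr _ _ fun t ht => by rw [Nat.mod_eq_of_lt ht]).trans h) K
  simpa [stateAt_zero] using this

theorem stateAt_mem_range {q : Q} (w : ℕ → X) (m : ℕ) :
    stateAt step q w m ∈ Set.range fun l : List X => l.foldl step q := ⟨_, rfl⟩

/-- A word that is not a beginning of any `W i` splits at the first letter where it leaves all
the `W i`. -/
theorem exists_first_departure {k : ℕ} (W : Fin k → ℕ → X) {i₀ : Fin k} {r : List X}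
    (hr : ∀ i, (List.range r.length).map (W i) ≠ r) :
    ∃ i x t, r = (List.range (r.length - 1 - t.length)).map (W i) ++ x :: t ∧
      t.length < r.length ∧
      ∀ i', (List.range (r.length - 1 - t.length + 1)).map (W i') ≠
        (List.range (r.length - 1 - t.length)).map (W i) ++ [x] := by
  induction r using List.reverseRecOn with
  | nil => exact absurd rfl (hr i₀)
  | append_singleton r y ih =>
    by_cases h : ∀ i, (List.range r.length).map (W i) ≠ r
    · obtain ⟨i, x, t, h1, h2, h3⟩ := ih h
      have h4 : (r ++ [y]).length - 1 - (t ++ [y]).length = r.length - 1 - t.length := by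
        simp; omega
      refine ⟨i, x, t ++ [y], ?_, by simpa using h2, ?_⟩
      · rw [h4, ← List.cons_append, ← List.append_assoc, ← h1]
      · rw [h4]; exact h3
    · push Not at h
      obtain ⟨i, hi⟩ := h
      refine ⟨i, y, [], by simp [hi], by simp, fun i' => ?_⟩
      have := hr i'
      simpa [hi] using this

theorem finite_setOf_eventually_periodic (X : Type*) [Finite X] (N : ℕ) :
    {w : ℕ → X | ∃ m l, m + l ≤ N ∧ 0 < l ∧ ∀ j, m ≤ j → w (j + l) = w j}.Finite := by
  refine (Set.finite_range fun z : Fin (N + 1) × Fin (N + 1) × (Fin (N + 1) → X) =>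
    fun t : ℕ => z.2.2 (Fin.ofNat (N + 1)
      (if t < z.1 then t else z.1 + (t - z.1) % z.2.1))).subset ?_
  rintro w ⟨m, l, hN, hl, hw⟩
  refine ⟨(⟨m, by omega⟩, ⟨l, by omega⟩, fun i => w i), funext fun t => ?_⟩
  have hper : Function.Periodic (fun t => w (m + t)) l := fun t => by
    simpa [add_assoc] using hw (m + t) (by omega)
  by_cases h : t < m
  · simp [h, Nat.mod_eq_of_lt (show t < N + 1 by omega)]
  · have h1 := Nat.mod_lt (t - m) hl
    have h2 := hper.map_mod_nat (t - m)
    simp only [h, if_false, Fin.val_ofNat,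
      Nat.mod_eq_of_lt (show m + (t - m) % l < N + 1 by omega)]
    rw [h2, Nat.add_sub_cancel' (not_lt.1 h)]

variable (step) [Fintype X]

theorem finite_activeWords (q : Q) (n : ℕ) : (activeWords step e q n).Finite :=
  (List.finite_length_eq X n).subset fun _ h => h.1

theorem activity_foldl_le (q : Q) (r : List X) (n : ℕ) :
    activity step e (r.foldl step q) n ≤ activity step e q (n + r.length) := by
  refine Set.ncard_le_ncard_of_injOn (fun l => r ++ l) ?_
    (fun _ _ _ _ h => List.append_cancel_left h) (finite_activeWords ..)
  rintro l ⟨h1, h2⟩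
  refine ⟨by simp [h1, add_comm], by simpa using h2⟩

theorem activity_succ_le (q : Q) (n : ℕ) :
    activity step e q (n + 1) ≤ ∑ x, activity step e (step q x) n := by
  classical
  have h : activeWords step e q (n + 1) ⊆
      ↑(Finset.univ.biUnion fun x : X =>
        (finite_activeWords step e (step q x) n).toFinset.image (List.cons x)) := by
    rintro l ⟨h1, h2⟩
    cases l with
    | nil => simp at h1
    | cons x l => simpa [activeWords] using ⟨by simpa using h1, h2⟩
  refine (Set.ncard_le_ncard h (Finset.finite_toSet _)).trans ?_
  rw [Set.ncard_coe_finset]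
  refine Finset.card_biUnion_le.trans (Finset.sum_le_sum fun x _ => ?_)
  refine Finset.card_image_le.trans ?_
  rw [activity, Set.ncard_eq_toFinset_card _ (finite_activeWords ..)]

variable {step e}

theorem PolyBounded.activity_foldl {d : ℕ} {q : Q} (h : PolyBounded d (activity step e q))
    (r : List X) : PolyBounded d (activity step e (r.foldl step q)) :=
  (h.shift r.length).mono (activity_foldl_le step e q r)

theorem exists_step_not_polyBounded {d : ℕ} {q : Q}
    (h : ¬ PolyBounded d (activity step e q)) :
    ∃ x, ¬ PolyBounded d (activity step e (step q x)) := by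
  by_contra! hx
  exact h (((PolyBounded.sum Finset.univ fun x _ => hx x).mono
    (activity_succ_le step e q)).of_shift_one)

/-- If a cycle `a` at `q` can be left along `p` to reach a state with a cycle `b` of the same
length, then the activity of that state has smaller degree than the activity of `q`. -/
theorem PolyBounded.of_cycles {d : ℕ} {q : Q} (hq : PolyBounded (d + 1) (activity step e q))
    {a b p : List X} (hab : b.length = a.length) (hlen : p.length ≤ a.length) (hpa : ¬ p <+: a)
    (ha : a.foldl step q = q) (hb : b.foldl step (p.foldl step q) = p.foldl step q) :
    PolyBounded d (activity step e (p.foldl step q)) := by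
  refine hq.of_mul_le a.length p.length fun j m => ?_
  have hcard : (j + 1) * activity step e (p.foldl step q) m =
      ((Set.univ : Set (Fin (j + 1))) ×ˢ activeWords step e (p.foldl step q) m).ncard := by
    rw [Set.ncard_prod, Set.ncard_univ, Nat.card_fin, activity]
  rw [hcard]
  refine Set.ncard_le_ncard_of_injOn (fun z => (List.replicate z.1 a).flatten ++
    (p ++ ((List.replicate (j - z.1) b).flatten ++ z.2))) ?_ ?_ (finite_activeWords ..)
  · rintro ⟨i, l⟩ ⟨-, hl1, hl2⟩
    refine ⟨?_, ?_⟩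
    · have : (i : ℕ) * a.length + (j - i) * a.length = j * a.length := by
        rw [← add_mul]; congr 1; omega
      simp only [List.length_append, List.length_flatten, List.map_replicate,
        List.sum_replicate, smul_eq_mul, hab] at hl1 ⊢
      omega
    · simpa only [List.foldl_append, foldl_flatten_replicate ha, foldl_flatten_replicate hb]
        using hl2
  · rintro ⟨i, l⟩ - ⟨i', l'⟩ - h
    have hi : i = i' := Fin.ext (eq_of_flatten_replicate_append_eq hpa hlen h)
    subst hi
    simpa using h

/-- Along a sequence of states of top-degree activity, a repetition of states forces the
sequence of letters to be periodic. -/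
theorem periodic_of_not_polyBounded {d : ℕ} {q : Q}
    (hq : PolyBounded (d + 1) (activity step e q))
    (hfin : (Set.range fun l : List X => l.foldl step q).Finite) {w : ℕ → X}
    (hw : ∀ m, ¬ PolyBounded d (activity step e (stateAt step q w m))) {m l : ℕ} (hl : 0 < l)
    (hs : stateAt step q w (m + l) = stateAt step q w m) (j : ℕ) (hj : m ≤ j) :
    w (j + l) = w j := by
  by_contra hne
  obtain ⟨m₁, k, hm₁, hk, hs₁⟩ : ∃ m₁ k, j + l < m₁ ∧ 0 < k ∧
      stateAt step q w (m₁ + k) = stateAt step q w m₁ := by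
    have := hfin.to_subtype
    obtain ⟨x, y, hxy, h⟩ := Finite.exists_ne_map_eq_of_infinite
      fun n => (⟨stateAt step q w (j + l + 1 + n), stateAt_mem_range w _⟩ :
        Set.range fun l : List X => l.foldl step q)
    have h := congrArg Subtype.val h
    dsimp only at h
    rcases lt_or_gt_of_ne hxy with h' | h'
    · exact ⟨j + l + 1 + x, y - x, by omega, by omega, by
        rw [show j + l + 1 + x + (y - x) = j + l + 1 + y by omega, h]⟩
    · exact ⟨j + l + 1 + y, x - y, by omega, by omega, by
        rw [show j + l + 1 + y + (x - y) = j + l + 1 + x by omega, h]⟩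
  obtain ⟨c, rfl⟩ : ∃ c, m₁ = m + c := ⟨m₁ - m, by omega⟩
  have hc : 0 < c := by omega
  set s := stateAt step q w m with hsdef
  have hsq : PolyBounded (d + 1) (activity step e s) := hq.activity_foldl _
  have hp : stateAt step s (fun t => w (m + t)) c = stateAt step q w (m + c) :=
    (stateAt_add ..).symm
  refine hw (m + c) ?_
  rw [← hp]
  refine hsq.of_cycles
    (a := (List.range (c * k * l)).map fun t => w (m + t % l))
    (b := (List.range (c * l * k)).map fun t => w (m + c + t % k))
    (p := (List.range c).map fun t => w (m + t)) (by simp; ring) ?_ ?_ ?_ ?_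
  · simp only [List.length_map, List.length_range, mul_assoc]
    exact Nat.le_mul_of_pos_right _ (Nat.mul_pos hk hl)
  · intro hpre
    have hget : ∀ t < c, w (m + t) = w (m + t % l) := by
      intro t ht
      have := hpre.getElem (i := t) (by simpa using ht)
      simpa using this
    apply hne
    have h1 := hget (j - m) (by omega)
    have h2 := hget (j - m + l) (by omega)
    rw [Nat.add_mod_right, ← h1] at h2
    rwa [show m + (j - m + l) = j + l by omega, show m + (j - m) = j by omega] at h2
  · exact stateAt_mod_mul (f := fun t => w (m + t)) (by rw [← stateAt_add]; exact hs) _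
  · have h3 : stateAt step (stateAt step s (fun t => w (m + t)) c)
        (fun t => w (m + c + t)) k = stateAt step s (fun t => w (m + t)) c := by
      rw [hp, ← stateAt_add]; exact hs₁
    exact stateAt_mod_mul (f := fun t => w (m + c + t)) h3 _

theorem exists_period_of_not_polyBounded {d : ℕ} {q : Q}
    (hq : PolyBounded (d + 1) (activity step e q))
    (hfin : (Set.range fun l : List X => l.foldl step q).Finite) {w : ℕ → X}
    (hw : ∀ m, ¬ PolyBounded d (activity step e (stateAt step q w m))) :
    ∃ m l, m + l ≤ hfin.toFinset.card ∧ 0 < l ∧ (∀ j, m ≤ j → w (j + l) = w j) ∧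
      stateAt step q w (m + l) = stateAt step q w m := by
  have key : ∀ m m', m < m' → m' ≤ hfin.toFinset.card →
      stateAt step q w m = stateAt step q w m' →
      ∃ m l, m + l ≤ hfin.toFinset.card ∧ 0 < l ∧ (∀ j, m ≤ j → w (j + l) = w j) ∧
        stateAt step q w (m + l) = stateAt step q w m := by
    intro m m' h1 h2 h3
    obtain ⟨l, rfl⟩ := Nat.exists_eq_add_of_lt h1
    exact ⟨m, l + 1, h2, by omega,
      periodic_of_not_polyBounded hq hfin hw (by omega) h3.symm, h3.symm⟩
  obtain ⟨x, hx, y, hy, hxy, h⟩ := Finset.exists_ne_map_eq_of_card_lt_of_maps_to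
    (s := Finset.range (hfin.toFinset.card + 1)) (t := hfin.toFinset)
    (f := fun m => stateAt step q w m) (by simp)
    (fun m _ => by
      rw [Set.Finite.coe_toFinset]
      exact stateAt_mem_range w m)
  rw [Finset.mem_range] at hx hy
  rcases lt_or_gt_of_ne hxy with h' | h'
  · exact key x y h' (by omega) h
  · exact key y x h' (by omega) h.symm

theorem exists_sequence_not_polyBounded {d : ℕ} {q : Q} {r : List X}
    (h : ¬ PolyBounded d (activity step e (r.foldl step q))) :
    ∃ w : ℕ → X, (List.range r.length).map w = r ∧
      ∀ m, ¬ PolyBounded d (activity step e (stateAt step q w m)) := by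
  have : Nonempty X := ⟨(exists_step_not_polyBounded h).choose⟩
  choose! c hc using fun s : Q => exists_step_not_polyBounded (step := step) (e := e) (d := d)
    (q := s)
  let s : ℕ → Q := fun n => n.rec (r.foldl step q) fun _ s => step s (c s)
  have hs : ∀ n, ¬ PolyBounded d (activity step e (s n)) := fun n => by
    induction n with
    | zero => exact h
    | succ n ih => exact hc _ ih
  let w : ℕ → X := fun t => if h : t < r.length then r[t] else c (s (t - r.length))
  have hr : (List.range r.length).map w = r :=
    List.ext_getElem (by simp) fun i _ h2 => by simp [w, h2]
  have hw : ∀ n, stateAt step q w (r.length + n) = s n := fun n => by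
    induction n with
    | zero => rw [add_zero, stateAt, hr]; rfl
    | succ n ih => rw [← add_assoc, stateAt_succ, ih]; simp [w, s]
  refine ⟨w, hr, fun m hm => hs m ?_⟩
  rw [← hw, add_comm, stateAt_add]
  exact hm.activity_foldl _

/-- The sequences of letters along which the activity stays of top degree are finitely many
eventually periodic sequences, and they capture all words of top-degree activity. -/
theorem exists_finite_of_polyBounded {d : ℕ} {q : Q}
    (hq : PolyBounded (d + 1) (activity step e q))
    (hfin : (Set.range fun l : List X => l.foldl step q).Finite) :
    ∃ W : Set (ℕ → X), W.Finite ∧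
      (∀ w ∈ W, ∃ m l, 0 < l ∧ (∀ j, m ≤ j → w (j + l) = w j) ∧
        stateAt step q w (m + l) = stateAt step q w m) ∧
      ∀ r : List X, (∀ w ∈ W, (List.range r.length).map w ≠ r) →
        PolyBounded d (activity step e (r.foldl step q)) := by
  refine ⟨{w | ∀ m, ¬ PolyBounded d (activity step e (stateAt step q w m))}, ?_, ?_, ?_⟩
  · refine (finite_setOf_eventually_periodic X hfin.toFinset.card).subset fun w hw => ?_
    obtain ⟨m, l, h1, h2, h3, -⟩ := exists_period_of_not_polyBounded hq hfin hw
    exact ⟨m, l, h1, h2, h3⟩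
  · intro w hw
    obtain ⟨m, l, -, h⟩ := exists_period_of_not_polyBounded hq hfin hw
    exact ⟨m, l, h⟩
  · intro r hr
    by_contra h
    obtain ⟨w, hw, hbad⟩ := exists_sequence_not_polyBounded h
    exact hr w hbad hw

theorem polyBounded_succ_of_departures {d : ℕ} {q : Q}
    (hfin : (Set.range fun l : List X => l.foldl step q).Finite) {k : ℕ} (W : Fin k → ℕ → X)
    (hW : ∀ r : List X, (∀ i, (List.range r.length).map (W i) ≠ r) →
      PolyBounded d (activity step e (r.foldl step q))) :
    PolyBounded (d + 1) (activity step e q) := by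
  classical
  rcases k with - | k
  · exact (hW [] fun i => i.elim0).succ
  let F := hfin.toFinset.filter fun s => PolyBounded d (activity step e s)
  have hF : PolyBounded d (fun n => ∑ s ∈ F, activity step e s n) :=
    PolyBounded.sum F fun s hs => (Finset.mem_filter.1 hs).2
  refine (hF.partial_sum (k + 1) ((k + 1) * Fintype.card X)).mono fun n => ?_
  let P : ℕ → Fin (k + 1) → X → List X := fun m i x => (List.range (n - 1 - m)).map (W i) ++ [x]
  let A : Finset (List X) := Finset.univ.image fun i => (List.range n).map (W i)
  let B : ℕ → Fin (k + 1) × X → Finset (List X) := fun m z =>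
    if ∀ i', (List.range (n - 1 - m + 1)).map (W i') ≠ P m z.1 z.2 then
      (finite_activeWords step e ((P m z.1 z.2).foldl step q) m).toFinset.image
        (P m z.1 z.2 ++ ·)
    else ∅
  have hcover : activeWords step e q n ⊆
      ↑(A ∪ (Finset.range n).biUnion fun m => Finset.univ.biUnion (B m)) := by
    rintro r ⟨rfl, hr⟩
    by_cases h : ∀ i, (List.range r.length).map (W i) ≠ r
    · obtain ⟨i, x, t, h1, h2, h3⟩ := exists_first_departure W (i₀ := 0) h
      refine Finset.mem_coe.2 (Finset.mem_union_right _ ?_)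
      refine Finset.mem_biUnion.2 ⟨t.length, Finset.mem_range.2 h2, ?_⟩
      refine Finset.mem_biUnion.2 ⟨(i, x), Finset.mem_univ _, ?_⟩
      have h4 : P t.length i x ++ t = r := by
        conv_rhs => rw [h1]
        simp [P]
      simp only [B, P]
      rw [if_pos h3]
      refine Finset.mem_image.2 ⟨t, ?_, h4⟩
      rw [Set.Finite.mem_toFinset]
      refine ⟨rfl, fun h5 => hr ?_⟩
      rw [← List.foldl_append] at h5
      exact (congrArg (List.foldl step q) h4).symm.trans h5
    · push Not at h
      obtain ⟨i, hi⟩ := h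
      exact Finset.mem_coe.2 (Finset.mem_union_left _
        (Finset.mem_image.2 ⟨i, Finset.mem_univ _, hi⟩))
  have hA : A.card ≤ k + 1 := Finset.card_image_le.trans (by simp)
  have hB : ∀ m z, (B m z).card ≤ ∑ s ∈ F, activity step e s m := by
    intro m z
    simp only [B]
    split_ifs with h
    · refine Finset.card_image_le.trans ?_
      rw [← Set.ncard_eq_toFinset_card _ (finite_activeWords ..)]
      refine Finset.single_le_sum (f := fun s => activity step e s m) (fun _ _ => Nat.zero_le _)
        (Finset.mem_filter.2 ⟨?_, hW _ ?_⟩)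
      · rw [Set.Finite.mem_toFinset]
        exact ⟨_, rfl⟩
      · simpa [P] using h
    · simp
  calc activity step e q n
      ≤ (A ∪ (Finset.range n).biUnion fun m => Finset.univ.biUnion (B m)).card := by
        rw [← Set.ncard_coe_finset]
        exact Set.ncard_le_ncard hcover (Finset.finite_toSet _)
    _ ≤ A.card + ∑ m ∈ Finset.range n, ∑ z, (B m z).card :=
        (Finset.card_union_le _ _).trans (Nat.add_le_add_left (Finset.card_biUnion_le.trans
          (Finset.sum_le_sum fun _ _ => Finset.card_biUnion_le)) _)
    _ ≤ k + 1 + ∑ m ∈ Finset.range n, ∑ _z : Fin (k + 1) × X, ∑ s ∈ F, activity step e s m :=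
        add_le_add hA (Finset.sum_le_sum fun m _ => Finset.sum_le_sum fun z _ => hB m z)
    _ = k + 1 + (k + 1) * Fintype.card X * ∑ m ∈ Finset.range n, ∑ s ∈ F, activity step e s m := by
        simp [Finset.mul_sum]

end Automaton

section TreeAut

variable {X : Type*}

theorem wappend_of_lt {m : ℕ} (v : Fin m → X) (u : ℕ → X) {i : ℕ} (h : i < m) :
    wappend v u i = v ⟨i, h⟩ := dif_pos h

theorem wappend_add {m : ℕ} (v : Fin m → X) (u : ℕ → X) (j : ℕ) :
    wappend v u (m + j) = u j := by
  simp [wappend]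

theorem wappend_agree_iff {m : ℕ} (v : Fin m → X) (u u' : ℕ → X) (n : ℕ) :
    (∀ i, i < m + n → wappend v u i = wappend v u' i) ↔ ∀ i, i < n → u i = u' i := by
  constructor
  · intro h i hi
    simpa only [wappend_add] using h (m + i) (by omega)
  · intro h i hi
    rcases lt_or_ge i m with him | him
    · rw [wappend_of_lt v u him, wappend_of_lt v u' him]
    · obtain ⟨j, rfl⟩ := Nat.exists_eq_add_of_le him
      rw [wappend_add, wappend_add]
      exact h j (by omega)

theorem eq_wappend_of_agree {m : ℕ} {v : Fin m → X} {u z : ℕ → X}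
    (h : ∀ i : Fin m, z i = v i) (h' : ∀ j, z (m + j) = u j) : z = wappend v u := by
  funext i
  rcases lt_or_ge i m with him | him
  · rw [wappend_of_lt v u him]; exact h ⟨i, him⟩
  · obtain ⟨j, rfl⟩ := Nat.exists_eq_add_of_le him
    rw [wappend_add, h']

namespace IsTreeAut

variable {f : Equiv.Perm (ℕ → X)}

theorem apply_wappend_of_lt (hf : IsTreeAut f) {m : ℕ} (v : Fin m → X) (u u' : ℕ → X) {i : ℕ}
    (h : i < m) : f (wappend v u) i = f (wappend v u') i :=
  (hf m (wappend v u) (wappend v u')).1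
    (fun i hi => by rw [wappend_of_lt v u hi, wappend_of_lt v u' hi]) i h

theorem bijective_restrictFun (hf : IsTreeAut f) {m : ℕ} (v : Fin m → X) :
    Function.Bijective (restrictFun f v) := by
  constructor
  · intro u u' h
    have h1 : f (wappend v u) = f (wappend v u') := by
      funext i
      rcases lt_or_ge i m with him | him
      · exact hf.apply_wappend_of_lt v u u' him
      · obtain ⟨j, rfl⟩ := Nat.exists_eq_add_of_le him
        exact congrFun h j
    have h2 := f.injective h1
    funext j
    rw [← wappend_add v u j, h2, wappend_add]
  · intro y
    let y' := wappend (fun i : Fin m => f (wappend v y) i) y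
    have hz : f.symm y' = wappend v fun j => f.symm y' (m + j) := by
      refine eq_wappend_of_agree (fun i => ?_) fun _ => rfl
      refine ((hf m (f.symm y') (wappend v y)).2 (fun i hi => ?_) i i.2).trans
        (wappend_of_lt v y i.2)
      rw [Equiv.apply_symm_apply]
      exact wappend_of_lt _ _ hi
    refine ⟨fun j => f.symm y' (m + j), funext fun j => ?_⟩
    rw [restrictFun, ← hz, Equiv.apply_symm_apply]
    exact wappend_add _ _ _

theorem restrictPerm_apply (hf : IsTreeAut f) {m : ℕ} (v : Fin m → X) (u : ℕ → X) (j : ℕ) :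
    restrictPerm f v u j = f (wappend v u) (m + j) := by
  rw [restrictPerm, dif_pos (hf.bijective_restrictFun v)]
  rfl

theorem restrictPerm (hf : IsTreeAut f) {m : ℕ} (v : Fin m → X) :
    IsTreeAut (restrictPerm f v) := by
  intro n u u'
  rw [← wappend_agree_iff v, hf (m + n)]
  constructor
  · intro h i hi
    rw [hf.restrictPerm_apply, hf.restrictPerm_apply]
    exact h _ (by omega)
  · intro h i hi
    rcases lt_or_ge i m with him | him
    · exact hf.apply_wappend_of_lt v u u' him
    · obtain ⟨j, rfl⟩ := Nat.exists_eq_add_of_le him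
      rw [← hf.restrictPerm_apply, ← hf.restrictPerm_apply]
      exact h j (by omega)

end IsTreeAut

/-- The restriction of a permutation of `X^ω` at a one-letter word. -/
noncomputable def letterRestrict (f : Equiv.Perm (ℕ → X)) (x : X) : Equiv.Perm (ℕ → X) :=
  restrictPerm f fun _ : Fin 1 => x

variable {f : Equiv.Perm (ℕ → X)}

theorem restrictPerm_prefix (hf : IsTreeAut f) (w : ℕ → X) (m : ℕ) :
    restrictPerm f (fun i : Fin m => w i) = stateAt letterRestrict f w m := by
  induction m with
  | zero =>
    ext u j
    rw [hf.restrictPerm_apply, zero_add, stateAt_zero]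
    exact congrFun (congrArg f (funext fun i => by simp [wappend])) j
  | succ m ih =>
    rw [stateAt_succ, ← ih]
    ext u j
    rw [letterRestrict, (hf.restrictPerm _).restrictPerm_apply, hf.restrictPerm_apply,
      hf.restrictPerm_apply, ← add_assoc]
    refine congrFun (congrArg f (eq_wappend_of_agree (fun i => ?_) fun j => ?_).symm) _
    · refine i.lastCases ?_ fun i => ?_
      · have := wappend_add (fun i : Fin m => w i) (wappend (fun _ : Fin 1 => w m) u) 0
        simpa [wappend_of_lt] using this
      · exact wappend_of_lt _ _ i.2
    · rw [add_assoc, wappend_add, wappend_add]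

theorem map_range_wappend {m : ℕ} (v : Fin m → X) (u : ℕ → X) :
    (List.range m).map (wappend v u) = List.ofFn v :=
  List.ext_getElem (by simp) fun i h _ => by
    simpa using wappend_of_lt v u (by simpa using h)

variable [Nonempty X]

theorem restrictPerm_eq_foldl (hf : IsTreeAut f) {m : ℕ} (v : Fin m → X) :
    restrictPerm f v = (List.ofFn v).foldl letterRestrict f := by
  let u : ℕ → X := fun _ => Classical.arbitrary X
  have hv : v = fun i : Fin m => wappend v u i := funext fun i => (wappend_of_lt v u i.2).symm
  rw [← map_range_wappend v u]
  conv_lhs => rw [hv]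
  exact restrictPerm_prefix hf _ _

theorem restrictTrivial_iff (hf : IsTreeAut f) {m : ℕ} (v : Fin m → X) :
    RestrictTrivial f v ↔ (List.ofFn v).foldl letterRestrict f = 1 := by
  rw [← restrictPerm_eq_foldl hf]
  constructor
  · intro h
    ext u j
    rw [hf.restrictPerm_apply, h _ (fun i => wappend_of_lt v u i.2) _ (Nat.le_add_right _ _),
      wappend_add]
    rfl
  · intro h u hu i hi
    obtain ⟨j, rfl⟩ := Nat.exists_eq_add_of_le hi
    have hu' : u = wappend v fun j => u (m + j) := eq_wappend_of_agree hu fun _ => rfl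
    conv_lhs => rw [hu']
    rw [← hf.restrictPerm_apply, h]
    rfl

theorem thetaGrowth_eq_activity (hf : IsTreeAut f) (n : ℕ) :
    thetaGrowth f n = activity letterRestrict 1 f n := by
  rw [thetaGrowth, activity, ← Set.ncard_image_of_injective _ (List.ofFn_injective (n := n))]
  congr 1
  ext l
  constructor
  · rintro ⟨v, hv, rfl⟩
    exact ⟨by simp, fun h => hv ((restrictTrivial_iff hf v).2 h)⟩
  · rintro ⟨rfl, hl⟩
    refine ⟨l.get, fun h => hl ?_, List.ofFn_get l⟩
    simpa only [List.ofFn_get] using (restrictTrivial_iff hf _).1 h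

theorem finiteState_iff (hf : IsTreeAut f) :
    FiniteState f ↔ (Set.range fun l : List X => l.foldl letterRestrict f).Finite := by
  rw [FiniteState]
  refine iff_of_eq (congrArg _ (Set.ext fun h => ⟨?_, ?_⟩))
  · rintro ⟨m, v, rfl⟩
    exact ⟨List.ofFn v, (restrictPerm_eq_foldl hf v).symm⟩
  · rintro ⟨l, rfl⟩
    exact ⟨l.length, l.get, by rw [restrictPerm_eq_foldl hf, List.ofFn_get]⟩

theorem FiniteState.restrictPerm (hf : IsTreeAut f) (hfs : FiniteState f) {m : ℕ}
    (v : Fin m → X) : FiniteState (restrictPerm f v) := by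
  rw [finiteState_iff (hf.restrictPerm v)]
  refine ((finiteState_iff hf).1 hfs).subset ?_
  rintro _ ⟨l, rfl⟩
  refine ⟨List.ofFn v ++ l, ?_⟩
  simp only [List.foldl_append, restrictPerm_eq_foldl hf]

theorem isFinitary_iff [Fintype X] (hf : IsTreeAut f) :
    IsFinitary f ↔ PolyBounded 0 (activity letterRestrict 1 f) := by
  constructor
  · rintro ⟨N, hN⟩
    refine ⟨N, fun n hn => ?_⟩
    rw [← thetaGrowth_eq_activity hf, thetaGrowth, Set.ncard_eq_zero (Set.toFinite _)]
    refine Set.eq_empty_of_forall_notMem fun v hv => hv fun u _ i hi => hN u i (by omega)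
  · rintro ⟨N, hN⟩
    refine ⟨N, fun u i hi => ?_⟩
    have h := hN N le_rfl
    rw [← thetaGrowth_eq_activity hf, thetaGrowth, Set.ncard_eq_zero (Set.toFinite _)] at h
    by_contra hne
    exact Set.eq_empty_iff_forall_notMem.1 h (fun i : Fin N => u i)
      fun ht => hne (ht u (fun _ => rfl) i hi)

theorem exists_polynomial_bound_iff (d : ℕ) (F : ℕ → ℕ) :
    (∃ p : Polynomial ℕ, p.natDegree ≤ d ∧ ∀ n, F n ≤ p.eval n) ↔ PolyBounded (d + 1) F := by
  constructor
  · rintro ⟨p, hp, h⟩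
    refine ⟨∑ i ∈ Finset.range (p.natDegree + 1), p.coeff i, fun n => (h n).trans ?_⟩
    rw [Polynomial.eval_eq_sum_range, Finset.sum_mul]
    refine Finset.sum_le_sum fun i hi => Nat.mul_le_mul_left _ ?_
    rw [Finset.mem_range] at hi
    exact (Nat.pow_le_pow_left (by omega) i).trans (Nat.pow_le_pow_right (by omega) (by omega))
  · rintro ⟨C, hC⟩
    refine ⟨Polynomial.C C * (Polynomial.X + 1) ^ d, ?_, fun n => by simpa using hC n⟩
    compute_degree

theorem memP_iff [Fintype X] (hf : IsTreeAut f) (hfs : FiniteState f) (d : ℕ) :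
    MemP ((d : ℤ) - 1) f ↔ PolyBounded d (activity letterRestrict 1 f) := by
  cases d with
  | zero =>
    rw [← isFinitary_iff hf]
    simp [MemP, hf]
  | succ d =>
    rw [← exists_polynomial_bound_iff]
    have h1 : ¬ ((d : ℤ) = -1) := by omega
    simp [MemP, hf, hfs, thetaGrowth_eq_activity hf, h1]

end TreeAut

/-- A sequence with period `l` from position `m` on is `v·u^ω` for its own subwords. -/
theorem epSeq_eq_of_periodic {X : Type*} [Nonempty X] {m l : ℕ} (hl : 0 < l) {w : ℕ → X}
    (hw : ∀ j, m ≤ j → w (j + l) = w j) :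
    epSeq m l (fun i => w i) (fun i => w (m + i)) = w := by
  have hper : Function.Periodic (fun t => w (m + t)) l := fun t => by
    simpa [add_assoc] using hw (m + t) (by omega)
  funext j
  rcases lt_or_ge j m with h | h
  · simp [epSeq, h]
  · have h2 := hper.map_mod_nat (j - m)
    simp only [epSeq, not_lt.2 h, hl, dif_pos, dif_neg, not_false_eq_true]
    rw [h2, Nat.add_sub_cancel' h]

/-- **Proposition `pr:polydescription`.** Let `X` be a finite set and
`d ≥ 0`. A finite-state automorphism `g` of `X^*` belongs to `P_d(X)` if and only if there
is a finite set `W = {v_i·u_i^ω : i < k}` of eventually periodic sequences in `X^ω` such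
that the restrictions `g|_{v_i u_i^n}` do not depend on `n`, and `g|_v ∈ P_{d-1}(X)` for
every `v ∈ X^*` which is not a beginning of any `v_i·u_i^ω`. -/
theorem stmt_11 (X : Type*) [Fintype X] [Nonempty X] (d : ℤ) (hd : 0 ≤ d)
    (g : Equiv.Perm (ℕ → X)) (hg : IsTreeAut g) (hfs : FiniteState g) :
    MemP d g ↔
      ∃ (k : ℕ) (la lb : Fin k → ℕ) (v : ∀ i : Fin k, Fin (la i) → X)
        (u : ∀ i : Fin k, Fin (lb i) → X),
        (∀ i, 0 < lb i) ∧
        (∀ (i : Fin k) (n : ℕ),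
          restrictPerm g
              (fun j : Fin (la i + n * lb i) => epSeq (la i) (lb i) (v i) (u i) j) =
            restrictPerm g (v i)) ∧
        (∀ (m : ℕ) (vv : Fin m → X),
          (∀ i : Fin k, ¬ ∀ j : Fin m, epSeq (la i) (lb i) (v i) (u i) j = vv j) →
          MemP (d - 1) (restrictPerm g vv)) := by
  obtain ⟨n, rfl⟩ := Int.eq_ofNat_of_zero_le hd
  have hreach := (finiteState_iff hg).1 hfs
  have hd' : ((n : ℤ)) = ((n + 1 : ℕ) : ℤ) - 1 := by push_cast; ring
  rw [show MemP (n : ℤ) g ↔ _ from hd' ▸ memP_iff hg hfs (n + 1)]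
  have hmem : ∀ (m : ℕ) (vv : Fin m → X), MemP ((n : ℤ) - 1) (restrictPerm g vv) ↔
      PolyBounded n (activity letterRestrict 1 ((List.ofFn vv).foldl letterRestrict g)) := by
    intro m vv
    rw [memP_iff (hg.restrictPerm vv) (hfs.restrictPerm hg vv), restrictPerm_eq_foldl hg]
  constructor
  · intro h
    obtain ⟨W, hWfin, hW, hgood⟩ := exists_finite_of_polyBounded h hreach
    choose! M L hL hper hstate using hW
    have := hWfin.to_subtype
    let E := (Finite.equivFin W).symm
    have hep : ∀ i, epSeq (M (E i)) (L (E i)) (fun j => (E i : ℕ → X) j)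
        (fun j => (E i : ℕ → X) (M (E i) + j)) = E i :=
      fun i => epSeq_eq_of_periodic (hL _ (E i).2) (hper _ (E i).2)
    refine ⟨Nat.card W, fun i => M (E i), fun i => L (E i), fun i j => (E i : ℕ → X) j,
      fun i j => (E i : ℕ → X) (M (E i) + j), fun i => hL _ (E i).2, fun i n => ?_,
      fun m vv hvv => ?_⟩
    · simp only [hep]
      rw [restrictPerm_prefix hg, restrictPerm_prefix hg]
      exact stateAt_add_mul _ _ (hper _ (E i).2) (hstate _ (E i).2) n
    · rw [hmem]
      refine hgood _ fun w hw heq => hvv (E.symm ⟨w, hw⟩) fun j => ?_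
      rw [hep, Equiv.apply_symm_apply]
      have := congrArg (fun l => l[(j : ℕ)]?) heq
      simpa using this
  · rintro ⟨k, la, lb, v, u, -, -, hgood⟩
    refine polyBounded_succ_of_departures hreach
      (fun i => epSeq (la i) (lb i) (v i) (u i)) fun r hr => ?_
    rw [← List.ofFn_get r, ← hmem]
    refine hgood _ _ fun i hi => hr i (List.ext_getElem (by simp) fun j _ h2 => ?_)
    simpa using hi ⟨j, h2⟩
end

section
/- Let X be a finite set, d ≥ -1, and let G ≤ P_d(X) be a finitely generated subgroup. Then every connected component of the Schreier graph of the action of G on X^ω is amenable. -/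
/-! ### Sections of self-maps of `X^ω` and countability of singular sets -/

/-- The sequence made of the first `m` letters of `w` followed by `u`. -/
def splice {X : Type*} (w : ℕ → X) (m : ℕ) (u : ℕ → X) : ℕ → X :=
  fun i => if i < m then w i else u (i - m)

/-- The section of a self-map `f` of `X^ω` at the beginning of length `m` of `w`. -/
def sectionAt {X : Type*} (f : (ℕ → X) → ℕ → X) (w : ℕ → X) (m : ℕ) : (ℕ → X) → ℕ → X :=
  fun u j => f (splice w m u) (m + j)

/-- The beginning of length `n` of a sequence. -/
def beginWord {X : Type*} (n : ℕ) (x : ℕ → X) : Fin n → X := fun i => x i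

section Sections

variable {X : Type*}

lemma beginWord_eq_iff {n : ℕ} {x y : ℕ → X} :
    beginWord n x = beginWord n y ↔ ∀ i, i < n → x i = y i :=
  ⟨fun h i hi => congrFun h ⟨i, hi⟩, fun h => funext fun i => h i i.2⟩

lemma beginWord_wappend {n : ℕ} (v : Fin n → X) (u : ℕ → X) :
    beginWord n (wappend v u) = v := by
  funext i
  simp [beginWord, wappend]

lemma splice_self_shift (w : ℕ → X) (m : ℕ) : splice w m (fun i => w (m + i)) = w := by
  funext i
  unfold splice
  split_ifs with h
  · rfl
  · exact congrArg w (Nat.add_sub_cancel' (not_lt.1 h))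

lemma sectionAt_congr (f : (ℕ → X) → ℕ → X) {w w' : ℕ → X} {m : ℕ}
    (h : ∀ i, i < m → w i = w' i) : sectionAt f w m = sectionAt f w' m := by
  have : ∀ u, splice w m u = splice w' m u := by
    intro u
    funext i
    unfold splice
    split_ifs with hi
    · exact h i hi
    · rfl
  funext u j
  simp only [sectionAt, this]

lemma sectionAt_add (f : (ℕ → X) → ℕ → X) (w : ℕ → X) (m k : ℕ) :
    sectionAt f w (m + k) = sectionAt (sectionAt f w m) (fun i => w (m + i)) k := by
  have : ∀ u, splice w (m + k) u = splice w m (splice (fun i => w (m + i)) k u) := by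
    intro u
    funext i
    unfold splice
    by_cases h1 : i < m
    · simp [h1, Nat.lt_add_right k h1]
    · by_cases h2 : i < m + k
      · have h3 : i - m < k := by omega
        simp only [h1, h2, h3, if_true, if_false]
        congr 1
        omega
      · have h3 : ¬ i - m < k := by omega
        simp only [h1, h2, h3, if_false]
        congr 1
        omega
  funext u j
  simp only [sectionAt, this, add_assoc]

lemma restrictTrivial_iff_sectionAt (f : Equiv.Perm (ℕ → X)) (w : ℕ → X) (m : ℕ) :
    RestrictTrivial f (beginWord m w) ↔ sectionAt f w m = id := by
  constructor
  · intro h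
    funext u j
    have := h (splice w m u) (fun i => by simp [splice, beginWord]) (m + j) (by omega)
    simpa [sectionAt, splice] using this
  · intro h u hu i hi
    have hs : splice w m (fun i => u (m + i)) = u := by
      conv_rhs => rw [← splice_self_shift u m]
      funext i
      unfold splice
      split_ifs with hi
      · exact (hu ⟨i, hi⟩).symm
      · rfl
    have := congrFun (congrFun h (fun i => u (m + i))) (i - m)
    simp only [sectionAt, hs, id] at this
    rwa [Nat.add_sub_cancel' hi] at this

lemma RestrictTrivial.mono {f : Equiv.Perm (ℕ → X)} {x : ℕ → X} {m n : ℕ} (hmn : m ≤ n)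
    (h : RestrictTrivial f (beginWord m x)) : RestrictTrivial f (beginWord n x) :=
  fun u hu i hi => h u (fun j => hu ⟨j, j.2.trans_le hmn⟩) i (hmn.trans hi)

lemma restrictFun_bijective {f : Equiv.Perm (ℕ → X)} (hf : IsTreeAut f) {m : ℕ}
    (v : Fin m → X) : Function.Bijective (restrictFun f v) := by
  have hpre : ∀ u u' : ℕ → X, ∀ i, i < m → f (wappend v u) i = f (wappend v u') i :=
    fun u u' => (hf m _ _).1 fun i hi => by simp [wappend, hi]
  constructor
  · intro u u' h
    have h1 : f (wappend v u) = f (wappend v u') := by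
      funext i
      by_cases hi : i < m
      · exact hpre u u' i hi
      · have := congrFun h (i - m)
        simpa [restrictFun, Nat.add_sub_cancel' (not_lt.1 hi)] using this
    have h2 := f.injective h1
    funext j
    simpa [wappend] using congrFun h2 (m + j)
  · intro y
    set z : ℕ → X := splice (f (wappend v y)) m y with hz
    have hpx : ∀ i, i < m → (f.symm z) i = wappend v y i := by
      refine (hf m _ _).2 fun i hi => ?_
      simp [hz, splice, hi]
    refine ⟨fun j => f.symm z (m + j), ?_⟩
    have hw : wappend v (fun j => f.symm z (m + j)) = f.symm z := by
      funext i
      by_cases hi : i < m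
      · rw [hpx i hi]
        simp [wappend, hi]
      · simp [wappend, hi, Nat.add_sub_cancel' (not_lt.1 hi)]
    funext j
    rw [restrictFun, hw, Equiv.apply_symm_apply, hz]
    simp [splice]

lemma finite_range_sectionAt {f : Equiv.Perm (ℕ → X)} (hf : IsTreeAut f)
    (hfs : FiniteState f) : {h | ∃ w m, sectionAt f w m = h}.Finite := by
  refine (hfs.image fun g : Equiv.Perm (ℕ → X) => (g : (ℕ → X) → ℕ → X)).subset ?_
  rintro _ ⟨w, m, rfl⟩
  refine ⟨_, ⟨m, beginWord m w, rfl⟩, ?_⟩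
  have hb := restrictFun_bijective hf (beginWord m w)
  simp only [restrictPerm, hb, dif_pos]
  rfl

/-- A polynomial is not bounded below by an exponential. -/
lemma exists_eval_lt_two_pow (p : Polynomial ℕ) : ∃ k : ℕ, p.eval k < 2 ^ k := by
  have h : Asymptotics.IsLittleO Filter.atTop (fun k : ℕ => ((p.eval k : ℕ) : ℝ))
      (fun k : ℕ => (2 : ℝ) ^ k) := by
    simp only [Polynomial.eval_eq_sum_range, Nat.cast_sum, Nat.cast_mul, Nat.cast_pow]
    refine Asymptotics.IsLittleO.fun_sum fun i _ => ?_
    exact (isLittleO_pow_const_const_pow_of_one_lt (R := ℝ) i one_lt_two).const_mul_left _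
  obtain ⟨k, hk⟩ := (h.bound (show (0 : ℝ) < 1 / 2 by norm_num)).exists
  refine ⟨k, ?_⟩
  have h2 : (0 : ℝ) < 2 ^ k := by positivity
  simp only [Real.norm_eq_abs, Nat.abs_cast, abs_of_pos h2] at hk
  have : ((p.eval k : ℕ) : ℝ) < 2 ^ k := by linarith
  exact_mod_cast this

/-- Two distinct return words of equal length at a nontrivial section force exponential
growth. -/
lemma two_pow_le_thetaGrowth [Finite X] (f : Equiv.Perm (ℕ → X)) {t : (ℕ → X) → ℕ → X}
    (ht : t ≠ id) {w : ℕ → X} {m : ℕ} (hwt : sectionAt f w m = t) {u u' : ℕ → X} {L : ℕ}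
    (hu : sectionAt t u L = t) (hu' : sectionAt t u' L = t) {j : ℕ} (hj : j < L)
    (hne : u j ≠ u' j) (k : ℕ) : 2 ^ k ≤ thetaGrowth f (m + L * k) := by
  classical
  have hL : 0 < L := by omega
  let W : (ℕ → Bool) → ℕ → X := fun b i => if b (i / L) then u (i % L) else u' (i % L)
  have hW : ∀ b k, sectionAt t (W b) (L * k) = t := by
    intro b k
    induction k with
    | zero =>
      funext x i
      have hx : splice (W b) 0 x = x := by
        funext i
        simp [splice]
      simp [sectionAt, hx]
    | succ k ih =>
      rw [Nat.mul_succ, sectionAt_add, ih]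
      cases hb : b k with
      | true =>
        refine (sectionAt_congr t fun i hi => ?_).trans hu
        simp [W, Nat.mul_add_div hL, Nat.div_eq_of_lt hi, Nat.mod_eq_of_lt hi, hb]
      | false =>
        refine (sectionAt_congr t fun i hi => ?_).trans hu'
        simp [W, Nat.mul_add_div hL, Nat.div_eq_of_lt hi, Nat.mod_eq_of_lt hi, hb]
  let padded : (Fin k → Bool) → ℕ → Bool := fun b i => if h : i < k then b ⟨i, h⟩ else false
  let F : (Fin k → Bool) → Fin (m + L * k) → X :=
    fun b => beginWord (m + L * k) (splice w m (W (padded b)))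
  have hF : Function.Injective F := by
    intro b b' h
    rw [beginWord_eq_iff] at h
    funext i
    have hlt : L * i + j < L * k := by
      calc L * i + j < L * (i + 1) := by rw [Nat.mul_succ]; omega
        _ ≤ L * k := Nat.mul_le_mul_left _ i.2
    have hval : ∀ c : Fin k → Bool,
        splice w m (W (padded c)) (m + (L * i + j)) = if c i then u j else u' j := by
      intro c
      simp [splice, W, padded, Nat.mul_add_div hL, Nat.div_eq_of_lt hj, Nat.mod_eq_of_lt hj]
    have hij := h (m + (L * i + j)) (by omega)
    rw [hval, hval] at hij
    cases hb : b i <;> cases hb' : b' i <;> simp only [hb, hb', if_true, Bool.false_eq_true,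
      if_false] at hij
    · rfl
    · exact absurd hij.symm hne
    · exact absurd hij hne
    · rfl
  have hsub : Set.range F ⊆ {v | ¬ RestrictTrivial f v} := by
    rintro _ ⟨b, rfl⟩
    simp only [Set.mem_ofPred_eq, F, restrictTrivial_iff_sectionAt]
    rw [sectionAt_add]
    have h1 : sectionAt f (splice w m (W (padded b))) m = t :=
      (sectionAt_congr _ fun i hi => by simp [splice, hi]).trans hwt
    have h2 : (fun i => splice w m (W (padded b)) (m + i)) = W (padded b) := by
      funext i
      simp [splice]
    rw [h1, h2, hW]
    exact ht
  calc 2 ^ k = Nat.card (Fin k → Bool) := by simp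
    _ = (Set.range F).ncard := by
      rw [← Set.image_univ, Set.ncard_image_of_injective _ hF, Set.ncard_univ]
    _ ≤ _ := Set.ncard_le_ncard hsub (Set.toFinite _)

/-- A finite-state automorphism of polynomial growth has countably many singular points. -/
lemma countable_singularSet_of_polynomial [Finite X] {f : Equiv.Perm (ℕ → X)}
    (hf : IsTreeAut f) (hfs : FiniteState f) (p : Polynomial ℕ)
    (hp : ∀ n, thetaGrowth f n ≤ p.eval n) : (singularSet f).Countable := by
  have hT := finite_range_sectionAt hf hfs
  set T := {h | ∃ w m, sectionAt f w m = h} with hTdef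
  have hret : ∀ t ∈ T, t ≠ id → ∀ (u u' : ℕ → X) (L : ℕ), sectionAt t u L = t →
      sectionAt t u' L = t → ∀ j, j < L → u j = u' j := by
    rintro t ⟨w, m, hwt⟩ ht u u' L hu hu' j hj
    by_contra hne
    obtain ⟨k, hk⟩ := exists_eval_lt_two_pow
      (p.comp (Polynomial.C m + Polynomial.C L * Polynomial.X))
    have h1 := two_pow_le_thetaGrowth f ht hwt hu hu' hj hne k
    have h2 := hp (m + L * k)
    simp only [Polynomial.eval_comp, Polynomial.eval_add, Polynomial.eval_C,
      Polynomial.eval_mul, Polynomial.eval_X] at hk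
    exact absurd (h1.trans h2) (not_le.2 hk)
  have huniq : ∀ t ∈ T, t ≠ id → ∀ a a' : ℕ → X, (∀ n, ∃ m > n, sectionAt t a m = t) →
      (∀ n, ∃ m > n, sectionAt t a' m = t) → a = a' := by
    intro t htT ht a a' ha ha'
    funext j
    obtain ⟨m, hm, hat⟩ := ha j
    obtain ⟨m', hm', hat'⟩ := ha' j
    have key : ∀ (b b' : ℕ → X) (k k' : ℕ), sectionAt t b k = t → sectionAt t b' k' = t →
        sectionAt t (splice b k b') (k + k') = t := by
      intro b b' k k' hb hb'
      rw [sectionAt_add, sectionAt_congr t (w' := b) fun i hi => by simp [splice, hi], hb]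
      simpa [splice] using hb'
    have := hret t htT ht (splice a m a') (splice a' m' a) (m + m') (key _ _ _ _ hat hat')
      (by rw [add_comm]; exact key _ _ _ _ hat' hat) j (by omega)
    simpa [splice, show j < m from hm, show j < m' from hm'] using this
  have hcover : singularSet f ⊆ ⋃ (m : ℕ) (v : Fin m → X), ⋃ t ∈ T,
      {x | beginWord m x = v ∧ t ≠ id ∧
        ∀ n, ∃ k > n, sectionAt t (fun i => x (m + i)) k = t} := by
    intro x hx
    have : Finite T := hT
    obtain ⟨⟨t, htT⟩, hinf⟩ := Finite.exists_infinite_fiber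
      (fun m : ℕ => (⟨sectionAt f x m, x, m, rfl⟩ : T))
    rw [Set.infinite_coe_iff] at hinf
    obtain ⟨m, hm⟩ := hinf.nonempty
    have hmt : sectionAt f x m = t := by simpa using hm
    simp only [Set.mem_iUnion]
    refine ⟨m, beginWord m x, t, htT, rfl, ?_, fun n => ?_⟩
    · rw [← hmt]
      exact fun h => hx m ((restrictTrivial_iff_sectionAt f x m).2 h)
    · obtain ⟨k, hk, hkn⟩ := hinf.exists_gt (m + n)
      refine ⟨k - m, by omega, ?_⟩
      have hkt : sectionAt f x k = t := by simpa using hk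
      rw [show k = m + (k - m) by omega, sectionAt_add, hmt] at hkt
      exact hkt
  refine Set.Countable.mono hcover ?_
  refine Set.countable_iUnion fun m => Set.countable_iUnion fun v =>
    hT.countable.biUnion fun t ht => Set.Subsingleton.countable ?_
  rintro x ⟨hxv, hid, hxr⟩ y ⟨hyv, -, hyr⟩
  have htail := huniq t ht hid _ _ hxr hyr
  have hpre := beginWord_eq_iff.1 (hxv.trans hyv.symm)
  funext i
  by_cases hi : i < m
  · exact hpre i hi
  · have := congrFun htail (i - m)
    simpa [Nat.add_sub_cancel' (not_lt.1 hi)] using this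

lemma MemP.countable_singularSet [Finite X] {d : ℤ} {f : Equiv.Perm (ℕ → X)}
    (hf : MemP d f) : (singularSet f).Countable := by
  obtain ⟨htree, ⟨-, n, hn⟩ | ⟨-, hfs, p, -, hp⟩⟩ := hf
  · have : singularSet f = ∅ :=
      Set.eq_empty_of_forall_notMem fun x hx => hx n fun u _ i hi => hn u i hi
    simp [this]
  · exact countable_singularSet_of_polynomial htree hfs p hp

end Sections

/-! ### Orbits on the levels of the tree -/

open scoped Classical in
/-- The beginnings of length `n` of the points of `Γ ⊆ X^ω`. -/
noncomputable def levelSet {X : Type*} [Fintype X] (Γ : Set (ℕ → X)) (n : ℕ) :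
    Finset (Fin n → X) :=
  Finset.univ.filter fun v => ∃ x ∈ Γ, beginWord n x = v

section Orbits

variable {X : Type*} [Fintype X]

lemma mem_levelSet {Γ : Set (ℕ → X)} {n : ℕ} {v : Fin n → X} :
    v ∈ levelSet Γ n ↔ ∃ x ∈ Γ, beginWord n x = v := by
  simp [levelSet]

/-- An infinite set of sequences has arbitrarily many beginnings. -/
lemma exists_le_card_levelSet {Γ : Set (ℕ → X)} (hΓ : Γ.Infinite) (K : ℕ) :
    ∃ n, K ≤ (levelSet Γ n).card := by
  classical
  obtain ⟨A, hAΓ, hA⟩ := hΓ.exists_subset_card_eq K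
  have hsep : ∀ q : (ℕ → X) × (ℕ → X), ∃ i, q.1 ≠ q.2 → q.1 i ≠ q.2 i := by
    intro q
    by_cases h : q.1 = q.2
    · exact ⟨0, fun h' => absurd h h'⟩
    · obtain ⟨i, hi⟩ := Function.ne_iff.1 h
      exact ⟨i, fun _ => hi⟩
  choose I hI using hsep
  refine ⟨(A ×ˢ A).sup I + 1, ?_⟩
  rw [← hA]
  refine Finset.card_le_card_of_injOn (beginWord _)
    (fun x hx => mem_levelSet.2 ⟨x, hAΓ hx, rfl⟩) ?_
  intro x hx y hy hxy
  by_contra hne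
  refine hI (x, y) hne (beginWord_eq_iff.1 hxy _ ?_)
  exact Nat.lt_succ_of_le (Finset.le_sup (f := I) (Finset.mk_mem_product hx hy))

open scoped Classical in
/-- All fibres between two levels of an orbit have the same size, hence each of them is at
most the average. -/
lemma card_levelSet_mul_card_fiber_le [Nonempty X] {G : Subgroup (Equiv.Perm (ℕ → X))}
    (hG : ∀ g ∈ G, IsTreeAut g) (w : ℕ → X) {m n : ℕ} (hmn : m ≤ n) (z : ℕ → X) :
    (levelSet {x | ∃ g ∈ G, g w = x} m).card *
      ((levelSet {x | ∃ g ∈ G, g w = x} n).filter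
        fun v => ∀ i (hi : i < m), v ⟨i, hi.trans_le hmn⟩ = z i).card ≤
      (levelSet {x | ∃ g ∈ G, g w = x} n).card := by
  set Γ : Set (ℕ → X) := {x | ∃ g ∈ G, g w = x} with hΓ
  let c : ℕ → X := fun _ => Classical.arbitrary X
  let r : (Fin n → X) → Fin m → X := fun v i => v ⟨i, i.2.trans_le hmn⟩
  set A := (levelSet Γ n).filter fun v => ∀ i (hi : i < m), v ⟨i, hi.trans_le hmn⟩ = z i
    with hA
  rcases A.eq_empty_or_nonempty with h0 | ⟨v₀, hv₀⟩
  · simp [h0]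
  obtain ⟨hv₀n, hv₀z⟩ := Finset.mem_filter.1 hv₀
  obtain ⟨_, ⟨g₀, hg₀, rfl⟩, hxv₀⟩ := mem_levelSet.1 hv₀n
  have hx₀z : ∀ i, i < m → g₀ w i = z i := by
    intro i hi
    rw [← hv₀z i hi, ← hxv₀]
    rfl
  have hmaps : ∀ v ∈ levelSet Γ n, r v ∈ levelSet Γ m := by
    intro v hv
    obtain ⟨x, hx, rfl⟩ := mem_levelSet.1 hv
    exact mem_levelSet.2 ⟨x, hx, rfl⟩
  rw [Finset.card_eq_sum_card_fiberwise hmaps, ← smul_eq_mul]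
  refine Finset.card_nsmul_le_sum _ _ _ fun u hu => ?_
  obtain ⟨_, ⟨g₁, hg₁, rfl⟩, rfl⟩ := mem_levelSet.1 hu
  have hgG : g₁ * g₀⁻¹ ∈ G := G.mul_mem hg₁ (G.inv_mem hg₀)
  set g := g₁ * g₀⁻¹ with hg
  have htree := hG g hgG
  have hgx : g (g₀ w) = g₁ w := by simp [hg]
  have happ : ∀ x, beginWord n (g (wappend (beginWord n x) c)) = beginWord n (g x) := by
    intro x
    rw [beginWord_eq_iff]
    exact (htree n _ _).1 (beginWord_eq_iff.1 (beginWord_wappend _ _))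
  refine Finset.card_le_card_of_injOn (fun v => beginWord n (g (wappend v c))) ?_ ?_
  · intro v hv
    obtain ⟨hvn, hvz⟩ := Finset.mem_filter.1 hv
    obtain ⟨_, ⟨h, hh, rfl⟩, rfl⟩ := mem_levelSet.1 hvn
    simp only [happ]
    refine Finset.mem_coe.2 (Finset.mem_filter.2 ⟨mem_levelSet.2
      ⟨_, ⟨g * h, G.mul_mem hgG hh, rfl⟩, rfl⟩, ?_⟩)
    change beginWord m (g (h w)) = beginWord m (g₁ w)
    rw [← hgx, beginWord_eq_iff]
    exact (htree m _ _).1 fun i hi => (hvz i hi).trans (hx₀z i hi).symm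
  · intro v _ v' _ h
    have := (htree n _ _).2 (beginWord_eq_iff.1 h)
    rw [← beginWord_eq_iff, beginWord_wappend, beginWord_wappend] at this
    exact this

open scoped Classical in
/-- If the singular set of `s` is countable and the orbit is infinite, then the proportion of
vertices of the `n`-th level of the orbit with nontrivial section of `s` tends to zero. -/
lemma eventually_card_nontrivial_le [Nonempty X] {G : Subgroup (Equiv.Perm (ℕ → X))}
    (hG : ∀ g ∈ G, IsTreeAut g) (w : ℕ → X) (hinf : {x | ∃ g ∈ G, g w = x}.Infinite)
    {s : Equiv.Perm (ℕ → X)} (hs : (singularSet s).Countable) {δ : ℝ} (hδ : 0 < δ) :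
    ∀ᶠ n in Filter.atTop,
      (((levelSet {x | ∃ g ∈ G, g w = x} n).filter fun v => ¬ RestrictTrivial s v).card : ℝ) ≤
        δ * (levelSet {x | ∃ g ∈ G, g w = x} n).card := by
  set Γ : Set (ℕ → X) := {x | ∃ g ∈ G, g w = x} with hΓ
  obtain ⟨z, hz⟩ := Set.countable_iff_exists_subset_range.1 hs
  obtain ⟨η, hη, c, hc, hcδ⟩ := posSumOfEncodable hδ ℕ
  have hlev : ∀ i, ∃ m, 1 ≤ η i * ((levelSet Γ m).card : ℝ) := by
    intro i
    obtain ⟨K, hK⟩ := exists_nat_ge (1 / η i)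
    obtain ⟨m, hm⟩ := exists_le_card_levelSet hinf K
    refine ⟨m, ?_⟩
    rw [div_le_iff₀' (hη i)] at hK
    exact hK.trans (mul_le_mul_of_nonneg_left (by exact_mod_cast hm) (hη i).le)
  choose l hl using hlev
  let _ : TopologicalSpace X := ⊥
  have : DiscreteTopology X := ⟨rfl⟩
  have hopen : ∀ (k : ℕ) (P : (Fin k → X) → Prop), IsOpen {x : ℕ → X | P (beginWord k x)} := by
    intro k P
    have hcont : Continuous (beginWord k : (ℕ → X) → Fin k → X) :=
      continuous_pi fun i => continuous_apply _
    exact (isOpen_discrete {v | P v}).preimage hcont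
  obtain ⟨t, ht⟩ := isCompact_univ.elim_finite_subcover
    (fun i : ℕ => {x : ℕ → X | beginWord (l i) x = beginWord (l i) (z i)} ∪
      {x | RestrictTrivial s (beginWord i x)})
    (fun i => (hopen (l i) fun v => v = beginWord (l i) (z i)).union
      (hopen i fun v => RestrictTrivial s v))
    (by
      intro x _
      rw [Set.mem_iUnion]
      by_cases hx : x ∈ singularSet s
      · obtain ⟨i, rfl⟩ := hz hx
        exact ⟨i, Or.inl rfl⟩
      · simp only [singularSet, Set.mem_ofPred_eq, not_forall, not_not] at hx
        obtain ⟨i, hi⟩ := hx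
        exact ⟨i, Or.inr hi⟩)
  filter_upwards [Filter.eventually_ge_atTop (t.sup id + t.sup l)] with n hn
  have hid : ∀ i ∈ t, i ≤ n := fun i hi => by
    have : i ≤ t.sup id := Finset.le_sup (f := id) hi
    omega
  have hln : ∀ i ∈ t, l i ≤ n := fun i hi => by
    have : l i ≤ t.sup l := Finset.le_sup hi
    omega
  let A : ℕ → Finset (Fin n → X) := fun i => (levelSet Γ n).filter
    fun v => ∀ j (_ : j < l i) (hjn : j < n), v ⟨j, hjn⟩ = z i j
  have hsub : ((levelSet Γ n).filter fun v => ¬ RestrictTrivial s v) ⊆ t.biUnion A := by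
    intro v hv
    obtain ⟨hvn, hvs⟩ := Finset.mem_filter.1 hv
    obtain ⟨x, hx, rfl⟩ := mem_levelSet.1 hvn
    have hxt := ht (Set.mem_univ x)
    simp only [Set.mem_iUnion] at hxt
    obtain ⟨i, hit, hxi | hxi⟩ := hxt
    · exact Finset.mem_biUnion.2 ⟨i, hit, Finset.mem_filter.2
        ⟨hvn, fun j hj _ => beginWord_eq_iff.1 hxi j hj⟩⟩
    · exact absurd (RestrictTrivial.mono (hid i hit) hxi) hvs
  have hAcard : ∀ i ∈ t, ((A i).card : ℝ) ≤ η i * (levelSet Γ n).card := by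
    intro i hi
    have h1 := card_levelSet_mul_card_fiber_le hG w (hln i hi) (z i)
    have h2 : A i = (levelSet Γ n).filter
        fun v => ∀ j (hj : j < l i), v ⟨j, hj.trans_le (hln i hi)⟩ = z i j :=
      Finset.filter_congr fun v _ => ⟨fun h j hj => h j hj _, fun h j hj _ => h j hj⟩
    rw [← h2] at h1
    have h3 : ((levelSet Γ (l i)).card : ℝ) * (A i).card ≤ (levelSet Γ n).card := by
      exact_mod_cast h1
    calc ((A i).card : ℝ) ≤ η i * (levelSet Γ (l i)).card * (A i).card :=
          le_mul_of_one_le_left (Nat.cast_nonneg _) (hl i)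
      _ = η i * ((levelSet Γ (l i)).card * (A i).card) := mul_assoc _ _ _
      _ ≤ _ := mul_le_mul_of_nonneg_left h3 (hη i).le
  calc (((levelSet Γ n).filter fun v => ¬ RestrictTrivial s v).card : ℝ)
      ≤ ((t.biUnion A).card : ℝ) := by exact_mod_cast Finset.card_le_card hsub
    _ ≤ ∑ i ∈ t, ((A i).card : ℝ) := by exact_mod_cast Finset.card_biUnion_le
    _ ≤ ∑ i ∈ t, η i * (levelSet Γ n).card := Finset.sum_le_sum hAcard
    _ = (∑ i ∈ t, η i) * (levelSet Γ n).card := (Finset.sum_mul _ _ _).symm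
    _ ≤ δ * (levelSet Γ n).card :=
      mul_le_mul_of_nonneg_right
        ((sum_le_hasSum t (fun i _ => (hη i).le) hc).trans hcδ) (Nat.cast_nonneg _)

end Orbits

/-- One-step moves on words of length `n` by elements of `S` with trivial section. -/
def TrivialStep {X : Type*} (S : Finset (Equiv.Perm (ℕ → X))) (n : ℕ) (v v' : Fin n → X) : Prop :=
  ∃ s ∈ S, RestrictTrivial s v ∧ ∃ x, beginWord n x = v ∧ beginWord n (s x) = v'

lemma RestrictTrivial.apply_wappend {X : Type*} {s : Equiv.Perm (ℕ → X)} (hs : IsTreeAut s)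
    {n : ℕ} {x : ℕ → X} (h : RestrictTrivial s (beginWord n x)) (a : ℕ → X) :
    s (wappend (beginWord n x) a) = wappend (beginWord n (s x)) a := by
  have hpre := (hs n (wappend (beginWord n x) a) x).1
    (beginWord_eq_iff.1 (beginWord_wappend _ _))
  funext i
  by_cases hi : i < n
  · rw [hpre i hi]
    simp [wappend, hi, beginWord]
  · rw [h _ (fun j => by simp [wappend]) i (not_lt.1 hi)]
    simp [wappend, hi]

/-- **Corollary `cor:polyamenablegraphs`.** Let `X` be a finite set,
`d ≥ -1`, and `G ≤ P_d(X)` a finitely generated subgroup (generated by the finite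
symmetric set `S`). Then every connected component of the Schreier graph of the action of
`(G, S)` on `X^ω` is amenable: for every `w ∈ X^ω` and `ε > 0` there is a finite nonempty
Følner set `Fs` inside the component (= the `G`-orbit) of `w` whose set of outgoing edges
`(s, x)`, `s ∈ S`, `x ∈ Fs`, `s x ∉ Fs` has fewer than `ε·|Fs|` elements. -/
theorem stmt_13 (X : Type*) [Fintype X] [Nonempty X] (d : ℤ) (hd : -1 ≤ d)
    (G : Subgroup (Equiv.Perm (ℕ → X))) (hGP : ∀ g ∈ G, MemP d g)
    (S : Finset (Equiv.Perm (ℕ → X))) (hSG : ∀ s ∈ S, s ∈ G)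
    (hSsymm : ∀ s ∈ S, s⁻¹ ∈ S)
    (hSgen : Subgroup.closure (S : Set (Equiv.Perm (ℕ → X))) = G)
    (w : ℕ → X) (ε : ℝ) (hε : 0 < ε) :
    ∃ Fs : Set (ℕ → X), Fs.Finite ∧ Fs.Nonempty ∧
      (∀ x ∈ Fs, ∃ g ∈ G, g w = x) ∧
      (({p : Equiv.Perm (ℕ → X) × (ℕ → X) |
          p.1 ∈ S ∧ p.2 ∈ Fs ∧ p.1 p.2 ∉ Fs}.ncard : ℝ) < ε * Fs.ncard) := by
  classical
  have hG : ∀ g ∈ G, IsTreeAut g := fun g hg => (hGP g hg).1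
  set Γ : Set (ℕ → X) := {x | ∃ g ∈ G, g w = x} with hΓ
  have hΓS : ∀ s ∈ S, ∀ x, s x ∈ Γ ↔ x ∈ Γ := by
    intro s hs x
    constructor
    · rintro ⟨g, hg, h⟩
      exact ⟨s⁻¹ * g, G.mul_mem (G.inv_mem (hSG s hs)) hg, by simp [h]⟩
    · rintro ⟨g, hg, rfl⟩
      exact ⟨s * g, G.mul_mem (hSG s hs) hg, rfl⟩
  have hwΓ : w ∈ Γ := ⟨1, G.one_mem, rfl⟩
  by_cases hfin : Γ.Finite
  · refine ⟨Γ, hfin, ⟨w, hwΓ⟩, fun x hx => hx, ?_⟩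
    have hempty : {p : Equiv.Perm (ℕ → X) × (ℕ → X) |
        p.1 ∈ S ∧ p.2 ∈ Γ ∧ p.1 p.2 ∉ Γ} = ∅ :=
      Set.eq_empty_of_forall_notMem fun p hp => hp.2.2 ((hΓS _ hp.1 _).2 hp.2.1)
    have hpos : 0 < Γ.ncard := (Set.ncard_pos hfin).2 ⟨w, hwΓ⟩
    rw [hempty, Set.ncard_empty, Nat.cast_zero]
    positivity
  -- Pick a level at which few vertices of the orbit have a nontrivial section.
  set δ : ℝ := ε / (S.card + 1) with hδdef
  have hδ : 0 < δ := by positivity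
  obtain ⟨n, hn⟩ := ((Filter.eventually_all_finset S).2 fun s hs =>
    eventually_card_nontrivial_le hG w hfin (hGP s (hSG s hs)).countable_singularSet hδ).exists
  rw [← hΓ] at hn
  set O := levelSet Γ n with hO
  have hOpos : 0 < (O.card : ℝ) := by
    exact_mod_cast Finset.card_pos.2 ⟨beginWord n w, mem_levelSet.2 ⟨w, hwΓ, rfl⟩⟩
  -- The components of the `n`-th level after removing the edges with nontrivial section.
  let R : Setoid (Fin n → X) := Relation.EqvGen.setoid (TrivialStep S n)
  let B : Finset (Equiv.Perm (ℕ → X) × (Fin n → X)) :=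
    (S ×ˢ O).filter fun q => ¬ RestrictTrivial q.1 q.2
  have hB : (B.card : ℝ) < ε * O.card := by
    have h1 : B.card = ∑ s ∈ S, (O.filter fun v => ¬ RestrictTrivial s v).card := by
      simp only [B, Finset.card_filter, Finset.sum_product]
    have h2 : (B.card : ℝ) ≤ ∑ s ∈ S, δ * (O.card : ℝ) := by
      rw [h1, Nat.cast_sum]
      exact Finset.sum_le_sum hn
    have h3 : (S.card : ℝ) * δ < ε := by
      rw [hδdef, mul_div_assoc', div_lt_iff₀ (by positivity)]
      nlinarith
    rw [Finset.sum_const, nsmul_eq_mul, ← mul_assoc] at h2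
    exact h2.trans_lt (mul_lt_mul_of_pos_right h3 hOpos)
  let q : (Fin n → X) → Quotient R := Quotient.mk R
  obtain ⟨κ, hκ, hκB⟩ : ∃ κ ∈ O.image q,
      ((B.filter fun p => q p.2 = κ).card : ℝ) < ε * (O.filter fun v => q v = κ).card := by
    refine Finset.exists_lt_of_sum_lt ?_
    rw [← Finset.mul_sum, ← Nat.cast_sum, ← Nat.cast_sum,
      ← Finset.card_eq_sum_card_fiberwise (f := q) (fun v hv => Finset.mem_image_of_mem q hv),
      ← Finset.card_eq_sum_card_fiberwise (f := fun p : _ × (Fin n → X) => q p.2)]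
    · exact hB
    · intro p hp
      exact Finset.mem_image_of_mem q (Finset.mem_product.1 (Finset.mem_filter.1 hp).1).2
  obtain ⟨v₀, hv₀, rfl⟩ := Finset.mem_image.1 hκ
  obtain ⟨x₀, hx₀, rfl⟩ := mem_levelSet.1 hv₀
  -- The chosen component lifts to the orbit.
  let a : ℕ → X := fun i => x₀ (n + i)
  have hx₀a : wappend (beginWord n x₀) a = x₀ := by
    funext i
    by_cases hi : i < n
    · simp [wappend, hi, beginWord]
    · simp [wappend, hi, a, Nat.add_sub_cancel' (not_lt.1 hi)]
  have hlift : ∀ v v', Relation.EqvGen (TrivialStep S n) v v' →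
      (wappend v a ∈ Γ ↔ wappend v' a ∈ Γ) := by
    intro v v' h
    induction h with
    | rel v v' h =>
      obtain ⟨s, hs, htriv, x, rfl, rfl⟩ := h
      rw [← htriv.apply_wappend (hG s (hSG s hs)) a, hΓS s hs]
    | refl v => rfl
    | symm v v' _ ih => exact ih.symm
    | trans v v' v'' _ _ ih ih' => exact ih.trans ih'
  set C := O.filter fun v => q v = q (beginWord n x₀) with hC
  have hCΓ : ∀ v, q v = q (beginWord n x₀) → wappend v a ∈ Γ := by
    intro v hv
    rw [hlift _ _ (Quotient.exact hv), hx₀a]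
    exact hx₀
  have hinj : Function.Injective fun v : Fin n → X => wappend v a := by
    intro v v' h
    have := congrArg (beginWord n) h
    simpa only [beginWord_wappend] using this
  refine ⟨(fun v => wappend v a) '' (C : Set (Fin n → X)), C.finite_toSet.image _,
    ⟨_, beginWord n x₀, Finset.mem_coe.2 (Finset.mem_filter.2 ⟨hv₀, rfl⟩), rfl⟩, ?_, ?_⟩
  · rintro _ ⟨v, hv, rfl⟩
    exact hCΓ v (Finset.mem_filter.1 hv).2
  · rw [Set.ncard_image_of_injective _ hinj, Set.ncard_coe_finset]
    refine lt_of_le_of_lt ?_ hκB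
    rw [Nat.cast_le, ← Set.ncard_coe_finset]
    refine (Set.ncard_le_ncard (t := (fun p : Equiv.Perm (ℕ → X) × (Fin n → X) =>
      (p.1, wappend p.2 a)) '' _) ?_ ((Finset.finite_toSet _).image _)).trans
      (Set.ncard_image_le (Finset.finite_toSet _))
    rintro ⟨s, _⟩ ⟨hs, ⟨v, hv, rfl⟩, hout⟩
    obtain ⟨hvO, hvq⟩ := Finset.mem_filter.1 hv
    refine ⟨(s, v), ?_, rfl⟩
    refine Finset.mem_coe.2 (Finset.mem_filter.2 ⟨Finset.mem_filter.2
      ⟨Finset.mk_mem_product hs hvO, fun htriv => hout ?_⟩, hvq⟩)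
    obtain ⟨x, -, rfl⟩ := mem_levelSet.1 hvO
    have hq : q (beginWord n (s x)) = q (beginWord n x₀) :=
      (Quotient.sound (Relation.EqvGen.symm _ _
        (Relation.EqvGen.rel _ _ ⟨s, hs, htriv, x, rfl, rfl⟩))).trans hvq
    refine ⟨beginWord n (s x), Finset.mem_coe.2 (Finset.mem_filter.2
      ⟨mem_levelSet.2 ⟨_, hCΓ _ hq, beginWord_wappend _ _⟩, hq⟩), ?_⟩
    exact (htriv.apply_wappend (hG s (hSG s hs)) a).symm
end
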